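/- For every natural number n, the function ν_n satisfies ν_n''(z) − 2(z + 4z/(1+2z²))·ν_n'(z) + 2n·ν_n(z) = 0 for all z ∈ ℂ with 1 + 2z² ≠ 0. -/

import Mathlib

/-- Even coefficients c_{2k}(n) of the generalized power series. -/
noncomputable def ceven (n k : ℕ) : ℂ :=
  if k = 0 then 1
  else if k = 1 then -(n : ℂ)
  else (-1) ^ k * 2 ^ k * (n : ℂ) * ((n : ℂ) - ((2 * (k : ℂ) - 1) ^ 2 + 1)) *
    (∏ j ∈ Finset.Icc 1 (k - 2), ((n : ℂ) - 2 * (1 + (j : ℂ)))) /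
      (Nat.factorial (2 * k) : ℂ)

/-- Odd coefficients: `codd n k` is c_{2k-1}(n), for k ≥ 1. -/
noncomputable def codd (n k : ℕ) : ℂ :=
  if k ≤ 1 then 1
  else (-1) ^ (k + 1) * 2 ^ (k - 1) * ((n : ℂ) - ((2 * ((k : ℂ) - 1)) ^ 2 + 1)) *
    (∏ j ∈ Finset.Icc 1 (k - 2), ((n : ℂ) - (2 * (1 + (j : ℂ)) - 1))) /
      (Nat.factorial (2 * k - 1) : ℂ)

/-- μₙ(z) = Σ_{k≥0} c_{2k}(n)·z^{2k}. -/
noncomputable def muF (n : ℕ) (z : ℂ) : ℂ := ∑' k : ℕ, ceven n k * z ^ (2 * k)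

/-- νₙ(z) = Σ_{k≥1} c_{2k-1}(n)·z^{2k-1}. -/
noncomputable def nuF (n : ℕ) (z : ℂ) : ℂ := ∑' k : ℕ, codd n (k + 1) * z ^ (2 * k + 1)

/-- βₙ = μₙ + νₙ. -/
noncomputable def betaF (n : ℕ) (z : ℂ) : ℂ := muF n z + nuF n z

/-!
With any scalar `α` in place of `n`, away from the zeros of `1 + 2z²` the equation is equivalent to
`(1 + 2z²) ω'' - 2 (5z + 2z³) ω' + 2α (1 + 2z²) ω = 0`. Substituting an everywhere convergent odd
series `∑ aₖ z^(2k+1)` and comparing coefficients turns it into a three-term recurrence for `aₖ`.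
From the second one on, the coefficients of `ν` have the form `aₖ₊₁ = (α - 4(k+1)² - 1) dₖ`,
where `dₖ` satisfies the two-term recurrence of the Hermite equation. This recurrence implies the
three-term one, and it makes `dₖ` decay like `Cᵏ / k!`, so that the series converges everywhere.
-/

section LacunarySeries

variable {ι 𝕜 : Type*} [RCLike 𝕜] {a b : ι → 𝕜} {e : ι → ℕ}

/-- The power series `∑ᵢ aᵢ z ^ eᵢ` with prescribed exponents, as a function of `z`. Allowing
arbitrary exponents lets odd series be differentiated without inserting zero coefficients. -/
noncomputable def lacunarySeries (a : ι → 𝕜) (e : ι → ℕ) (z : 𝕜) : 𝕜 :=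
  ∑' i, a i * z ^ e i

/-- The series `∑ᵢ aᵢ z ^ eᵢ` converges absolutely on discs of every radius. -/
def IsEntireSeries (a : ι → 𝕜) (e : ι → ℕ) : Prop :=
  ∀ r : ℝ, 0 ≤ r → Summable fun i ↦ ‖a i‖ * r ^ e i

namespace IsEntireSeries

theorem hasSum (ha : IsEntireSeries a e) (z : 𝕜) :
    HasSum (fun i ↦ a i * z ^ e i) (lacunarySeries a e z) := by
  refine (Summable.of_norm ?_).hasSum
  simpa only [norm_mul, norm_pow] using ha ‖z‖ (norm_nonneg z)

theorem of_norm_le (hb : IsEntireSeries b e) {C : ℝ} (hab : ∀ i, ‖a i‖ ≤ C * ‖b i‖) :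
    IsEntireSeries a e := by
  intro r hr
  refine Summable.of_nonneg_of_le (fun i ↦ by positivity) (fun i ↦ ?_) ((hb r hr).mul_left C)
  rw [← mul_assoc]
  gcongr
  exact hab i

theorem exponent_mul (ha : IsEntireSeries a e) : IsEntireSeries (fun i ↦ e i * a i) e := by
  intro r hr
  refine Summable.of_nonneg_of_le (fun i ↦ by positivity) (fun i ↦ ?_) (ha (2 * r) (by positivity))
  have exponent_le : (e i : ℝ) ≤ 2 ^ e i := by exact_mod_cast Nat.lt_two_pow_self.le
  calc ‖e i * a i‖ * r ^ e i = e i * (‖a i‖ * r ^ e i) := by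
        rw [norm_mul, RCLike.norm_natCast, mul_assoc]
    _ ≤ 2 ^ e i * (‖a i‖ * r ^ e i) := by gcongr
    _ = ‖a i‖ * (2 * r) ^ e i := by rw [mul_pow]; ring

theorem termwise_deriv (ha : IsEntireSeries a e) :
    IsEntireSeries (fun i ↦ e i * a i) (fun i ↦ e i - 1) := by
  intro r hr
  refine Summable.of_nonneg_of_le (fun i ↦ by positivity) (fun i ↦ ?_)
    (ha.exponent_mul (r + 1) (by positivity))
  have pow_le : r ^ (e i - 1) ≤ (r + 1) ^ e i :=
    calc r ^ (e i - 1) ≤ (r + 1) ^ (e i - 1) := by gcongr; linarith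
      _ ≤ (r + 1) ^ e i := pow_le_pow_right₀ (by linarith) (Nat.sub_le _ _)
  gcongr

theorem hasDerivAt (ha : IsEntireSeries a e) (z : 𝕜) :
    HasDerivAt (lacunarySeries a e)
      (lacunarySeries (fun i ↦ e i * a i) (fun i ↦ e i - 1) z) z := by
  have mem_ball : z ∈ Metric.ball (0 : 𝕜) (‖z‖ + 1) := by simp
  refine hasDerivAt_tsum_of_isPreconnected (g := fun i y ↦ a i * y ^ e i)
    (g' := fun i y ↦ e i * a i * y ^ (e i - 1)) (ha.termwise_deriv (‖z‖ + 1) (by positivity))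
    Metric.isOpen_ball (convex_ball (0 : 𝕜) (‖z‖ + 1)).isPreconnected
    (fun i y _ ↦ ?_) (fun i y hy ↦ ?_) mem_ball (ha.hasSum z).summable mem_ball
  · exact ((hasDerivAt_pow (e i) y).const_mul (a i)).congr_deriv (by ring)
  · rw [norm_mul, norm_pow]
    gcongr
    exact (mem_ball_zero_iff.mp hy).le

theorem deriv_eq (ha : IsEntireSeries a e) :
    deriv (lacunarySeries a e) = lacunarySeries (fun i ↦ e i * a i) (fun i ↦ e i - 1) :=
  funext fun z ↦ (ha.hasDerivAt z).deriv

theorem hasSum_mul_deriv (ha : IsEntireSeries a e) (z : 𝕜) :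
    HasSum (fun i ↦ e i * a i * z ^ e i) (z * deriv (lacunarySeries a e) z) := by
  rw [ha.deriv_eq]
  refine ((ha.termwise_deriv.hasSum z).mul_left z).congr_fun fun i ↦ ?_
  rcases e i with _ | m
  · simp
  · rw [Nat.add_sub_cancel]; ring

theorem hasSum_deriv_deriv (ha : IsEntireSeries a e) (z : 𝕜) :
    HasSum (fun i ↦ e i * (e i - 1) * a i * z ^ (e i - 2))
      (deriv (deriv (lacunarySeries a e)) z) := by
  rw [ha.deriv_eq, ha.termwise_deriv.deriv_eq]
  refine (ha.termwise_deriv.termwise_deriv.hasSum z).congr_fun fun i ↦ ?_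
  rcases e i with _ | m
  · simp
  · rw [Nat.sub_sub, Nat.add_sub_cancel]; push_cast; ring

theorem hasSum_sq_mul_deriv_deriv (ha : IsEntireSeries a e) (z : 𝕜) :
    HasSum (fun i ↦ e i * (e i - 1) * a i * z ^ e i)
      (z ^ 2 * deriv (deriv (lacunarySeries a e)) z) := by
  refine ((ha.hasSum_deriv_deriv z).mul_left (z ^ 2)).congr_fun fun i ↦ ?_
  rcases e i with _ | _ | m
  · simp
  · simp
  · rw [show m + 1 + 1 - 2 = m by lia]; ring

end IsEntireSeries

end LacunarySeries

section OddSeries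

variable {𝕜 : Type*} [RCLike 𝕜]

theorem IsEntireSeries.of_succ {a : ℕ → 𝕜} {e : ℕ → ℕ}
    (ha : IsEntireSeries (fun k ↦ a (k + 1)) (fun k ↦ e (k + 1))) : IsEntireSeries a e :=
  fun r hr ↦ (summable_nat_add_iff 1).mp (ha r hr)

theorem IsEntireSeries.hasSum_odd_deriv_deriv {a : ℕ → 𝕜}
    (ha : IsEntireSeries a fun k ↦ 2 * k + 1) (z : 𝕜) :
    HasSum (fun k : ℕ ↦ (2 * k + 3) * (2 * k + 2) * a (k + 1) * z ^ (2 * k + 1))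
      (deriv (deriv (lacunarySeries a fun k ↦ 2 * k + 1)) z) := by
  have shifted := (hasSum_nat_add_iff' 1).mpr (ha.hasSum_deriv_deriv z)
  simp only [Finset.sum_range_one, mul_zero, zero_add, Nat.cast_one, sub_self, zero_mul,
    sub_zero] at shifted
  refine shifted.congr_fun fun k ↦ ?_
  rw [show 2 * (k + 1) + 1 - 2 = 2 * k + 1 by lia]
  push_cast
  ring

theorem add_sq_mul_eq_zero_of_hasSum_odd {p q : ℕ → 𝕜} {z s t : 𝕜}
    (hp : HasSum (fun k ↦ p k * z ^ (2 * k + 1)) s)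
    (hq : HasSum (fun k ↦ q k * z ^ (2 * k + 1)) t)
    (h_zero : p 0 = 0) (h_succ : ∀ k, p (k + 1) + q k = 0) : s + z ^ 2 * t = 0 := by
  have hp_tail := (hasSum_nat_add_iff' 1).mpr hp
  simp only [Finset.sum_range_one, h_zero, zero_mul, sub_zero] at hp_tail
  refine (hp_tail.add (hq.mul_left (z ^ 2))).unique (hasSum_zero.congr_fun fun k ↦ ?_)
  linear_combination z ^ (2 * k + 3) * h_succ k

theorem exceptionalHermite_ode_of_recurrence {a : ℕ → 𝕜} {α : 𝕜}
    (ha : IsEntireSeries a fun k ↦ 2 * k + 1)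
    (h_zero : 6 * a 1 + (2 * α - 10) * a 0 = 0)
    (h_succ : ∀ k : ℕ, (2 * k + 5) * (2 * k + 4) * a (k + 2)
      + ((2 * k + 3) * (4 * k - 6) + 2 * α) * a (k + 1)
      + 4 * (α - (2 * k + 1)) * a k = 0) (z : 𝕜) :
    (1 + 2 * z ^ 2) * deriv (deriv (lacunarySeries a fun k ↦ 2 * k + 1)) z
      - 2 * (5 * z + 2 * z ^ 3) * deriv (lacunarySeries a fun k ↦ 2 * k + 1) z
      + 2 * α * (1 + 2 * z ^ 2) * lacunarySeries a (fun k ↦ 2 * k + 1) z = 0 := by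
  set f := lacunarySeries a fun k ↦ 2 * k + 1
  let p (k : ℕ) : 𝕜 :=
    (2 * k + 3) * (2 * k + 2) * a (k + 1) + ((2 * k + 1) * (4 * k - 10) + 2 * α) * a k
  let q (k : ℕ) : 𝕜 := 4 * (α - (2 * k + 1)) * a k
  have hp : HasSum (fun k ↦ p k * z ^ (2 * k + 1))
      (deriv (deriv f) z + 2 * (z ^ 2 * deriv (deriv f) z) - 10 * (z * deriv f z)
        + 2 * α * f z) := by
    refine ((((ha.hasSum_odd_deriv_deriv z).add ((ha.hasSum_sq_mul_deriv_deriv z).mul_left 2)).sub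
      ((ha.hasSum_mul_deriv z).mul_left 10)).add ((ha.hasSum z).mul_left (2 * α))).congr_fun
      fun k ↦ ?_
    simp only [p]
    push_cast
    ring
  have hq : HasSum (fun k ↦ q k * z ^ (2 * k + 1)) (4 * α * f z - 4 * (z * deriv f z)) := by
    refine (((ha.hasSum z).mul_left (4 * α)).sub ((ha.hasSum_mul_deriv z).mul_left 4)).congr_fun
      fun k ↦ ?_
    simp only [q]
    push_cast
    ring
  have p_zero : p 0 = 0 := by
    simp only [p, Nat.cast_zero]
    linear_combination h_zero
  have p_succ (k : ℕ) : p (k + 1) + q k = 0 := by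
    simp only [p, q]
    push_cast
    linear_combination h_succ k
  linear_combination add_sq_mul_eq_zero_of_hasSum_odd hp hq p_zero p_succ

end OddSeries

theorem norm_le_mul_pow_div_factorial {E : Type*} [SeminormedAddCommGroup E] {u : ℕ → E} {C : ℝ}
    (hC : 0 ≤ C) (hu : ∀ k : ℕ, ‖u (k + 1)‖ * (k + 1) ≤ C * ‖u k‖) (k : ℕ) :
    ‖u k‖ ≤ ‖u 0‖ * (C ^ k / k.factorial) := by
  induction k with
  | zero => simp
  | succ k ih =>
    calc ‖u (k + 1)‖ ≤ C * ‖u k‖ / (k + 1) := (le_div_iff₀ (by positivity)).mpr (hu k)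
      _ ≤ C * (‖u 0‖ * (C ^ k / k.factorial)) / (k + 1) := by gcongr
      _ = ‖u 0‖ * (C ^ (k + 1) / (k + 1).factorial) := by
        rw [Nat.factorial_succ]
        push_cast
        field_simp
        ring

theorem IsEntireSeries.of_norm_succ_mul_le {𝕜 : Type*} [RCLike 𝕜] {u : ℕ → 𝕜} {C : ℝ}
    (hC : 0 ≤ C) (hu : ∀ k : ℕ, ‖u (k + 1)‖ * (k + 1) ≤ C * ‖u k‖) (m l : ℕ) :
    IsEntireSeries u fun k ↦ m * k + l := by
  intro r hr
  refine Summable.of_nonneg_of_le (fun k ↦ by positivity) (fun k ↦ ?_)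
    ((Real.summable_pow_div_factorial (C * r ^ m)).mul_left (‖u 0‖ * r ^ l))
  calc ‖u k‖ * r ^ (m * k + l) ≤ ‖u 0‖ * (C ^ k / k.factorial) * r ^ (m * k + l) := by
        gcongr
        exact norm_le_mul_pow_div_factorial hC hu k
    _ = ‖u 0‖ * r ^ l * ((C * r ^ m) ^ k / k.factorial) := by ring

section Coefficients

variable {𝕜 : Type*} [RCLike 𝕜]

/-- The part of the coefficient of `z ^ (2k+3)` in `ν` left after removing the quadratic factor
`α - (4(k+1)² + 1)`. The natural number `n` is replaced by an arbitrary parameter `α`. -/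
noncomputable def reducedCoeff (α : 𝕜) (k : ℕ) : 𝕜 :=
  (-2) ^ (k + 1) * (∏ j ∈ Finset.Icc 1 k, (α - (2 * j + 1))) / (2 * k + 3).factorial

/-- The coefficient of `z ^ (2k+1)` in `ν`, with the natural number `n` replaced by an arbitrary
parameter `α`; the paper's `c_{2k-1}(n)` is `nuCoeff n (k - 1)`. -/
noncomputable def nuCoeff (α : 𝕜) : ℕ → 𝕜
  | 0 => 1
  | k + 1 => (α - (4 * (k + 1) ^ 2 + 1)) * reducedCoeff α k

theorem reducedCoeff_zero (α : 𝕜) : reducedCoeff α 0 = -1 / 3 := by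
  norm_num [reducedCoeff, Nat.factorial]

theorem reducedCoeff_succ_mul (α : 𝕜) (k : ℕ) :
    reducedCoeff α (k + 1) * ((2 * k + 4) * (2 * k + 5)) =
      -2 * (α - (2 * k + 3)) * reducedCoeff α k := by
  have factorial_eq : ((2 * (k + 1) + 3).factorial : 𝕜) =
      (2 * k + 4) * (2 * k + 5) * (2 * k + 3).factorial := by
    rw [show 2 * (k + 1) + 3 = 2 * k + 3 + 1 + 1 by ring, Nat.factorial_succ, Nat.factorial_succ]
    push_cast
    ring
  have factorial_ne : ((2 * k + 3).factorial : 𝕜) ≠ 0 := by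
    exact_mod_cast Nat.factorial_ne_zero _
  have four_ne : (2 * k + 4 : 𝕜) ≠ 0 := by exact_mod_cast (by lia : 2 * k + 4 ≠ 0)
  have five_ne : (2 * k + 5 : 𝕜) ≠ 0 := by exact_mod_cast (by lia : 2 * k + 5 ≠ 0)
  rw [reducedCoeff, reducedCoeff, factorial_eq, Finset.prod_Icc_succ_top (by lia)]
  push_cast
  field_simp
  ring

theorem nuCoeff_recurrence_zero (α : 𝕜) :
    6 * nuCoeff α 1 + (2 * α - 10) * nuCoeff α 0 = 0 := by
  simp only [nuCoeff, reducedCoeff_zero, Nat.cast_zero]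
  ring

theorem nuCoeff_recurrence_succ (α : 𝕜) (k : ℕ) :
    (2 * k + 5) * (2 * k + 4) * nuCoeff α (k + 2)
      + ((2 * k + 3) * (4 * k - 6) + 2 * α) * nuCoeff α (k + 1)
      + 4 * (α - (2 * k + 1)) * nuCoeff α k = 0 := by
  have hermite_step := reducedCoeff_succ_mul α k
  rcases k with _ | k
  · simp only [nuCoeff, reducedCoeff_zero, Nat.cast_zero, zero_add, Nat.cast_one]
      at hermite_step ⊢
    linear_combination (α - 17) * hermite_step
  · have hermite_step_prev := reducedCoeff_succ_mul α k
    simp only [nuCoeff]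
    push_cast at hermite_step ⊢
    linear_combination (α - (4 * (k + 3) ^ 2 + 1)) * hermite_step
      + 2 * (α - (4 * (k + 1) ^ 2 + 1)) * hermite_step_prev

theorem norm_sub_natCast_le (α : 𝕜) {m l : ℕ} (hml : m ≤ l) (hl : 1 ≤ l) :
    ‖α - m‖ ≤ (‖α‖ + 1) * l := by
  have hml : (m : ℝ) ≤ l := by exact_mod_cast hml
  have hl : (1 : ℝ) ≤ l := by exact_mod_cast hl
  calc ‖α - m‖ ≤ ‖α‖ + m := by simpa using norm_sub_le α (m : 𝕜)
    _ ≤ (‖α‖ + 1) * l := by nlinarith [norm_nonneg α]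

theorem norm_reducedCoeff_succ_mul_le (α : 𝕜) (k : ℕ) :
    ‖reducedCoeff α (k + 1)‖ * (k + 1) ≤ (‖α‖ + 1) * ‖reducedCoeff α k‖ := by
  have norm_eq : ‖reducedCoeff α (k + 1)‖ * ((2 * k + 4) * (2 * k + 5)) =
      2 * ‖α - (2 * k + 3 : ℕ)‖ * ‖reducedCoeff α k‖ := by
    have := congrArg norm (reducedCoeff_succ_mul α k)
    rw [show ((2 * k + 4) * (2 * k + 5) : 𝕜) = ((2 * k + 4) * (2 * k + 5) : ℕ) by push_cast; ring,
      norm_mul, RCLike.norm_natCast] at this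
    simpa using this
  have factor_le : ‖α - (2 * k + 3 : ℕ)‖ ≤ (‖α‖ + 1) * (2 * k + 4 : ℕ) :=
    norm_sub_natCast_le α (by lia) (by lia)
  refine le_of_mul_le_mul_right ?_ (by positivity : (0 : ℝ) < 2 * (2 * k + 4))
  calc ‖reducedCoeff α (k + 1)‖ * (k + 1) * (2 * (2 * k + 4))
      ≤ ‖reducedCoeff α (k + 1)‖ * ((2 * k + 4) * (2 * k + 5)) := by
        rw [mul_assoc]
        refine mul_le_mul_of_nonneg_left ?_ (norm_nonneg _)
        nlinarith
    _ = 2 * ‖α - (2 * k + 3 : ℕ)‖ * ‖reducedCoeff α k‖ := norm_eq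
    _ ≤ 2 * ((‖α‖ + 1) * (2 * k + 4 : ℕ)) * ‖reducedCoeff α k‖ := by gcongr
    _ = (‖α‖ + 1) * ‖reducedCoeff α k‖ * (2 * (2 * k + 4)) := by push_cast; ring

theorem isEntireSeries_nuCoeff (α : 𝕜) : IsEntireSeries (nuCoeff α) fun k ↦ 2 * k + 1 := by
  have reduced : IsEntireSeries (reducedCoeff α) fun k ↦ 2 * k + 3 :=
    .of_norm_succ_mul_le (by positivity) (norm_reducedCoeff_succ_mul_le α) 2 3
  refine .of_succ (reduced.exponent_mul.exponent_mul.of_norm_le (C := ‖α‖ + 1) fun k ↦ ?_)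
  have factor_le : ‖α - (4 * (k + 1) ^ 2 + 1 : ℕ)‖ ≤ (‖α‖ + 1) * ((2 * k + 3) ^ 2 : ℕ) :=
    norm_sub_natCast_le α (by ring_nf; lia) (by ring_nf; lia)
  calc ‖nuCoeff α (k + 1)‖ = ‖α - (4 * (k + 1) ^ 2 + 1 : ℕ)‖ * ‖reducedCoeff α k‖ := by
        rw [nuCoeff, norm_mul]; push_cast; rfl
    _ ≤ (‖α‖ + 1) * ((2 * k + 3) ^ 2 : ℕ) * ‖reducedCoeff α k‖ := by gcongr
    _ = (‖α‖ + 1) * ‖(2 * k + 3 : ℕ) * ((2 * k + 3 : ℕ) * reducedCoeff α k)‖ := by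
        rw [norm_mul, norm_mul, RCLike.norm_natCast]; push_cast; ring

theorem codd_succ_eq_nuCoeff (n k : ℕ) : codd n (k + 1) = nuCoeff (n : ℂ) k := by
  rcases k with _ | k
  · rfl
  · have factor_eq (j : ℕ) : (n : ℂ) - (2 * (1 + j) - 1) = n - (2 * j + 1) := by ring
    rw [codd, if_neg (by lia), nuCoeff, reducedCoeff, show 2 * (k + 1 + 1) - 1 = 2 * k + 3 by lia,
      neg_pow 2 (k + 1)]
    simp only [factor_eq, Nat.add_sub_cancel, Nat.reduceSubDiff]
    push_cast
    ring

theorem nuF_eq_lacunarySeries (n : ℕ) :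
    nuF n = lacunarySeries (nuCoeff (n : ℂ)) fun k ↦ 2 * k + 1 := by
  funext z
  simp only [nuF, lacunarySeries, codd_succ_eq_nuCoeff]

theorem stmt9_general (α z : 𝕜) (hz : 1 + 2 * z ^ 2 ≠ 0) :
    deriv (deriv (lacunarySeries (nuCoeff α) fun k ↦ 2 * k + 1)) z
      - 2 * (z + 4 * z / (1 + 2 * z ^ 2))
        * deriv (lacunarySeries (nuCoeff α) fun k ↦ 2 * k + 1) z
      + 2 * α * lacunarySeries (nuCoeff α) (fun k ↦ 2 * k + 1) z = 0 := by
  have cleared := exceptionalHermite_ode_of_recurrence (isEntireSeries_nuCoeff α)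
    (nuCoeff_recurrence_zero α) (nuCoeff_recurrence_succ α) z
  field_simp
  linear_combination cleared

end Coefficients

theorem stmt9 (n : ℕ) (z : ℂ) (hz : 1 + 2 * z ^ 2 ≠ 0) :
    deriv (deriv (nuF n)) z
      - 2 * (z + 4 * z / (1 + 2 * z ^ 2)) * deriv (nuF n) z
      + 2 * (n : ℂ) * nuF n z = 0 := by
  rw [nuF_eq_lacunarySeries]
  exact stmt9_general (n : ℂ) z hz
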